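/- Let X be a path-connected normal ENR, let Y be a paracompact space with covering dimension dim(Y) ≤ k, and let q : X × X → Y be a closed continuous map such that TC_X(q⁻¹(y)) ≤ n for each y ∈ Y. Then TC(X) ≤ (k + 1) · n. -/

import Mathlib

open Set

/-- A continuous local section of the free path fibration `π : C([0,1],X) → X × X`,
`π(γ) = (γ 0, γ 1)`, over a subset `S ⊆ X × X`. -/
def PathSecOn (X : Type*) [TopologicalSpace X] (S : Set (X × X)) : Prop :=
  ∃ s : C(S, C(unitInterval, X)),
    ∀ p : S, (s p) 0 = (p : X × X).1 ∧ (s p) 1 = (p : X × X).2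

/-- Subspace topological complexity `TC_X(A)` for `A ⊆ X × X`, valued in `ℕ∞`:
the least `k` such that `A` is covered by `k` sets open in `A`, each admitting a
continuous local section of the free path fibration. -/
noncomputable def subTC (X : Type*) [TopologicalSpace X] (A : Set (X × X)) : ℕ∞ :=
  sInf {n : ℕ∞ | ∃ k : ℕ, n = k ∧ ∃ U : Fin k → Set (X × X),
    (∀ i, ∃ V, IsOpen V ∧ U i = V ∩ A) ∧ (A ⊆ ⋃ i, U i) ∧ ∀ i, PathSecOn X (U i)}

/-- Topological complexity `TC(X) = TC_X(X × X)`. -/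
noncomputable def TopComplexity (X : Type*) [TopologicalSpace X] : ℕ∞ :=
  subTC X Set.univ

/-- Subspace Lusternik–Schnirelmann category `cat_X(B)` for `B ⊆ X`, valued in `ℕ∞`:
the least `k` such that `B` is covered by `k` sets open in `B`, each of whose
inclusions into `X` is null-homotopic. -/
noncomputable def subCat (X : Type*) [TopologicalSpace X] (B : Set X) : ℕ∞ :=
  sInf {n : ℕ∞ | ∃ k : ℕ, n = k ∧ ∃ U : Fin k → Set X,
    (∀ i, ∃ V, IsOpen V ∧ U i = V ∩ B) ∧ (B ⊆ ⋃ i, U i) ∧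
    ∀ i, ∃ x₀ : X, ContinuousMap.Homotopic
      (⟨fun u : U i => (u : X), continuous_subtype_val⟩ : C(U i, X))
      (ContinuousMap.const _ x₀)}

/-- Lusternik–Schnirelmann category `cat(X) = cat_X(X)`. -/
noncomputable def LSCat (X : Type*) [TopologicalSpace X] : ℕ∞ :=
  subCat X Set.univ

/-- `X` is an ENR: it embeds in some `ℝ^N` as a retract of an open set. -/
def IsENR (X : Type*) [TopologicalSpace X] : Prop :=
  ∃ (N : ℕ) (e : X → (Fin N → ℝ)) (O : Set (Fin N → ℝ)) (r : C(O, Fin N → ℝ)),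
    Topology.IsEmbedding e ∧ IsOpen O ∧ Set.range e ⊆ O ∧
    (∀ z : O, r z ∈ Set.range e) ∧ (∀ z : O, (z : Fin N → ℝ) ∈ Set.range e → r z = (z : Fin N → ℝ))

/-- `Y` has covering dimension at most `k`: every open cover of `Y` admits an open
refinement covering `Y` in which every point lies in at most `k + 1` members. -/
def CovDimLE (Y : Type*) [TopologicalSpace Y] (k : ℕ) : Prop :=
  ∀ 𝒰 : Set (Set Y), (∀ U ∈ 𝒰, IsOpen U) → ⋃₀ 𝒰 = Set.univ →
    ∃ 𝒱 : Set (Set Y), (∀ V ∈ 𝒱, IsOpen V) ∧ ⋃₀ 𝒱 = Set.univ ∧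
      (∀ V ∈ 𝒱, ∃ U ∈ 𝒰, V ⊆ U) ∧
      ∀ y : Y, {V ∈ 𝒱 | y ∈ V}.Finite ∧ {V ∈ 𝒱 | y ∈ V}.ncard ≤ k + 1

/-!
Near each fibre of `q`, the product `X × X` is covered by `n` open sets carrying path sections:
since `X` is an ENR, a section over a closed set extends to an open neighbourhood (extend it in
`ℝ^N` by Tietze, correct the endpoints linearly, retract back to `X`). Closedness of `q` makes
such a neighbourhood of a fibre contain the preimage of an open subset of `Y`, and the dimension
bound refines these preimages to a cover with at most `k + 1` members through each point. Milnor's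
trick of sorting the points by which members of a partition of unity dominate splits that cover
into `k + 1` disjoint families of open sets. Path sections glue over disjoint open sets, so each
family costs only `n` sets in the end.
-/

open Topology unitInterval Function

section Milnor

variable {M ι α : Type*} [LinearOrder α] [Zero α]

/-- Milnor's sets for a family of functions `f`: the points at which every function indexed by `S`
is positive and strictly larger than every function not indexed by `S`. For a partition of unity
they break an open cover into disjoint families, one for each cardinality of `S`. -/
def milnorSet (f : ι → M → α) (S : Finset ι) : Set M :=
  {p | ∀ i ∈ S, 0 < f i p ∧ ∀ j ∉ S, f j p < f i p}

theorem milnorSet_subset_support (f : ι → M → α) {S : Finset ι} {i : ι} (hi : i ∈ S) :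
    milnorSet f S ⊆ support (f i) :=
  fun _ hp => (hp i hi).1.ne'

theorem disjoint_milnorSet (f : ι → M → α) {S T : Finset ι} (hcard : S.card = T.card)
    (hne : S ≠ T) : Disjoint (milnorSet f S) (milnorSet f T) := by
  rw [Set.disjoint_left]
  intro p hpS hpT
  obtain ⟨i, hiS, hiT⟩ : ∃ i ∈ S, i ∉ T :=
    Finset.not_subset.1 fun h => hne (Finset.eq_of_subset_of_card_le h hcard.ge)
  obtain ⟨j, hjT, hjS⟩ : ∃ j ∈ T, j ∉ S :=
    Finset.not_subset.1 fun h => hne (Finset.eq_of_subset_of_card_le h hcard.le).symm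
  exact lt_asymm ((hpS i hiS).2 j hjS) ((hpT j hjT).2 i hiT)

theorem mem_milnorSet_of_mem_iff_ne_zero {f : ι → M → α} {p : M} (hf : ∀ i, 0 ≤ f i p)
    {S : Finset ι} (hS : ∀ i, i ∈ S ↔ f i p ≠ 0) : p ∈ milnorSet f S := by
  intro i hi
  have hpos : 0 < f i p := (hf i).lt_of_ne' ((hS i).1 hi)
  refine ⟨hpos, fun j hj => ?_⟩
  have hzero : f j p = 0 := not_not.1 fun h => hj ((hS j).2 h)
  exact hzero ▸ hpos

variable [TopologicalSpace α] [OrderClosedTopology α] [TopologicalSpace M]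

theorem isOpen_setOf_pos_and_forall_lt {f : ι → M → α} (hf : ∀ i, Continuous (f i))
    (hfin : LocallyFinite fun i => support (f i)) {g : M → α} (hg : Continuous g) (s : Set ι) :
    IsOpen {p | 0 < g p ∧ ∀ i ∈ s, f i p < g p} := by
  rw [isOpen_iff_mem_nhds]
  rintro p ⟨hpos, hlt⟩
  obtain ⟨t, ht, htfin⟩ := hfin p
  have hpos_near : ∀ᶠ z in 𝓝 p, 0 < g z :=
    continuousAt_const.eventually_lt hg.continuousAt hpos
  have hlt_near : ∀ᶠ z in 𝓝 p, ∀ i ∈ {i | (support (f i) ∩ t).Nonempty}, i ∈ s → f i z < g z := by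
    refine (Filter.eventually_all_finite htfin).2 fun i _ => Filter.eventually_imp_distrib_left.2 ?_
    exact fun hi => (hf i).continuousAt.eventually_lt hg.continuousAt (hlt i hi)
  filter_upwards [hpos_near, hlt_near, ht] with z hz_pos hz_lt hzt
  refine ⟨hz_pos, fun i hi => ?_⟩
  by_cases hiz : f i z = 0
  · exact hiz ▸ hz_pos
  · exact hz_lt i ⟨z, hiz, hzt⟩ hi

theorem isOpen_milnorSet {f : ι → M → α} (hf : ∀ i, Continuous (f i))
    (hfin : LocallyFinite fun i => support (f i)) (S : Finset ι) : IsOpen (milnorSet f S) := by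
  simp only [milnorSet, Set.ofPred_forall]
  exact isOpen_biInter_finset fun i _ => isOpen_setOf_pos_and_forall_lt hf hfin (hf i) {j | j ∉ S}

end Milnor

section Covers

variable {M : Type*} [TopologicalSpace M]

theorem exists_pairwiseDisjoint_open_refinement [NormalSpace M] [ParacompactSpace M] {ι : Type*}
    {U : ι → Set M} (hUo : ∀ i, IsOpen (U i)) (hUc : ⋃ i, U i = univ) {m : ℕ}
    (hord : ∀ p, {i | p ∈ U i}.encard ≤ m) :
    ∃ 𝒢 : Fin m → Set (Set M), (∀ j, (𝒢 j).PairwiseDisjoint id) ∧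
      (∀ j, ∀ G ∈ 𝒢 j, IsOpen G ∧ ∃ i, G ⊆ U i) ∧ ⋃ j, ⋃₀ 𝒢 j = univ := by
  obtain ⟨f, hf⟩ := PartitionOfUnity.exists_isSubordinate isClosed_univ U hUo hUc.ge
  have hsupp : ∀ i, support (f i) ⊆ U i := fun i => (subset_tsupport _).trans (hf i)
  refine ⟨fun j => milnorSet (fun i => f i) '' {S | S.card = j + 1}, fun j => ?_, ?_, ?_⟩
  · rintro _ ⟨S, hS, rfl⟩ _ ⟨T, hT, rfl⟩ hne
    exact disjoint_milnorSet _ (hS.trans hT.symm) (ne_of_apply_ne _ hne)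
  · rintro j _ ⟨S, hS, rfl⟩
    obtain ⟨i, hi⟩ : S.Nonempty := Finset.card_pos.1 (hS ▸ Nat.succ_pos _)
    exact ⟨isOpen_milnorSet (fun i => (f i).continuous) f.locallyFinite S,
      i, (milnorSet_subset_support _ hi).trans (hsupp i)⟩
  · refine eq_univ_of_forall fun p => ?_
    have hle : (f.finsupport p).card ≤ m := by
      rw [← Nat.cast_le (α := ℕ∞), ← Set.encard_coe_eq_coe_finsetCard]
      exact (Set.encard_le_encard fun i hi => hsupp i ((f.mem_finsupport p).1 hi)).trans (hord p)
    have hpos : 0 < (f.finsupport p).card := by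
      obtain ⟨i, hi⟩ := f.exists_pos (mem_univ p)
      exact Finset.card_pos.2 ⟨i, (f.mem_finsupport p).2 hi.ne'⟩
    refine mem_iUnion.2 ⟨⟨(f.finsupport p).card - 1, by lia⟩, _,
      ⟨f.finsupport p, (Nat.sub_add_cancel hpos).symm, rfl⟩, ?_⟩
    exact mem_milnorSet_of_mem_iff_ne_zero (fun i => f.nonneg i p) fun i => f.mem_finsupport p

theorem CovDimLE.exists_precise_refinement {k : ℕ} (hM : CovDimLE M k) {ι : Type*}
    {U : ι → Set M} (hUo : ∀ i, IsOpen (U i)) (hUc : ⋃ i, U i = univ) :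
    ∃ V : ι → Set M, (∀ i, IsOpen (V i)) ∧ ⋃ i, V i = univ ∧ (∀ i, V i ⊆ U i) ∧
      ∀ y, {i | y ∈ V i}.encard ≤ (k + 1 : ℕ) := by
  obtain ⟨𝒱, hVo, hVc, hVU, hord⟩ := hM (range U) (forall_mem_range.2 hUo) hUc
  simp only [exists_range_iff] at hVU
  choose c hc using fun V : 𝒱 => hVU V V.2
  refine ⟨fun i => ⋃ (V : 𝒱) (_ : c V = i), V, fun i => isOpen_biUnion fun V _ => hVo V V.2,
    eq_univ_of_forall fun y => ?_, fun i => iUnion₂_subset fun V hV => hV ▸ hc V, fun y => ?_⟩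
  · obtain ⟨V, hV, hyV⟩ : y ∈ ⋃₀ 𝒱 := hVc ▸ mem_univ y
    exact mem_iUnion.2 ⟨c ⟨V, hV⟩, mem_iUnion₂.2 ⟨⟨V, hV⟩, rfl, hyV⟩⟩
  · obtain ⟨hfin, hle⟩ := hord y
    calc {i | y ∈ ⋃ (V : 𝒱) (_ : c V = i), (V : Set M)}.encard
        ≤ (c '' {V : 𝒱 | y ∈ (V : Set M)}).encard := by
          refine encard_le_encard fun i hi => ?_
          obtain ⟨V, hV, hyV⟩ := mem_iUnion₂.1 hi
          exact ⟨V, hyV, hV⟩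
      _ ≤ {V : 𝒱 | y ∈ (V : Set M)}.encard := encard_image_le _ _
      _ = (Subtype.val '' {V : 𝒱 | y ∈ (V : Set M)}).encard :=
          (Subtype.val_injective.encard_image _).symm
      _ ≤ {V ∈ 𝒱 | y ∈ V}.encard := by
          refine encard_le_encard ?_
          rintro _ ⟨V, hyV, rfl⟩
          exact ⟨V.2, hyV⟩
      _ ≤ (k + 1 : ℕ) := by
          rw [← hfin.cast_ncard_eq]
          exact_mod_cast hle

/-- A property of subsets of a space that passes to subsets and to disjoint unions of open sets,
such as the existence of a section of a given map. -/
structure IsDisjointUnionStable (P : Set M → Prop) : Prop where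
  mono : ∀ ⦃S T⦄, S ⊆ T → P T → P S
  sUnion : ∀ 𝒢 : Set (Set M), (∀ G ∈ 𝒢, IsOpen G ∧ P G) → 𝒢.PairwiseDisjoint id → P (⋃₀ 𝒢)

theorem IsDisjointUnionStable.exists_open_cover_of_order_le [NormalSpace M] [ParacompactSpace M]
    {P : Set M → Prop} (hP : IsDisjointUnionStable P) {ι κ : Type*} {U : ι → Set M}
    (hUo : ∀ i, IsOpen (U i)) (hUc : ⋃ i, U i = univ) {m : ℕ}
    (hord : ∀ p, {i | p ∈ U i}.encard ≤ m) {W : ι → κ → Set M}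
    (hW : ∀ i l, IsOpen (W i l) ∧ P (W i l)) (hUW : ∀ i, U i ⊆ ⋃ l, W i l) :
    ∃ C : Fin m × κ → Set M, (∀ x, IsOpen (C x) ∧ P (C x)) ∧ ⋃ x, C x = univ := by
  obtain ⟨𝒢, hdisj, hG, hcov⟩ := exists_pairwiseDisjoint_open_refinement hUo hUc hord
  have hGW : ∀ j, ∀ G ∈ 𝒢 j, ∃ D : κ → Set M,
      (∀ l, IsOpen (D l) ∧ P (D l)) ∧ (∀ l, D l ⊆ G) ∧ G ⊆ ⋃ l, D l := by
    intro j G hGj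
    obtain ⟨hGo, i, hGU⟩ := hG j G hGj
    refine ⟨fun l => G ∩ W i l, fun l => ?_, fun l => inter_subset_left, ?_⟩
    · exact ⟨hGo.inter (hW i l).1, hP.mono inter_subset_right (hW i l).2⟩
    · rw [← inter_iUnion]
      exact subset_inter subset_rfl (hGU.trans (hUW i))
  choose! D hD hDG hGD using hGW
  have hD_image : ∀ j l, ∀ A ∈ (fun G => D j G l) '' 𝒢 j, IsOpen A ∧ P A := fun j l =>
    forall_mem_image.2 fun G hGj => hD j G hGj l
  have hD_disj : ∀ j l, ((fun G => D j G l) '' 𝒢 j).PairwiseDisjoint id := by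
    rintro j l _ ⟨G, hGj, rfl⟩ _ ⟨G', hG'j, rfl⟩ hne
    exact (hdisj j hGj hG'j fun h => hne (h ▸ rfl)).mono (hDG j G hGj l) (hDG j G' hG'j l)
  refine ⟨fun x => ⋃₀ ((fun G => D x.1 G x.2) '' 𝒢 x.1), fun x =>
    ⟨isOpen_sUnion fun A hA => (hD_image _ _ A hA).1, hP.sUnion _ (hD_image _ _) (hD_disj _ _)⟩,
    eq_univ_of_forall fun p => ?_⟩
  obtain ⟨j, G, hGj, hpG⟩ := mem_iUnion.1 (hcov.ge (mem_univ p))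
  obtain ⟨l, hpl⟩ := mem_iUnion.1 (hGD j G hGj hpG)
  exact mem_iUnion.2 ⟨(j, l), _, mem_image_of_mem _ hGj, hpl⟩

theorem IsDisjointUnionStable.exists_open_cover_of_fibers [NormalSpace M] [ParacompactSpace M]
    {P : Set M → Prop} (hP : IsDisjointUnionStable P) {Y : Type*} [TopologicalSpace Y] {k : ℕ}
    (hY : CovDimLE Y k) {q : M → Y} (hqcont : Continuous q) (hqclosed : IsClosedMap q)
    {κ : Type*}
    (hfib : ∀ y, ∃ W : κ → Set M, (∀ l, IsOpen (W l) ∧ P (W l)) ∧ q ⁻¹' {y} ⊆ ⋃ l, W l) :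
    ∃ C : Fin (k + 1) × κ → Set M, (∀ x, IsOpen (C x) ∧ P (C x)) ∧ ⋃ x, C x = univ := by
  choose W hW hfibW using hfib
  have hNo : ∀ y, IsOpen (kernImage q (⋃ l, W y l)) := fun y =>
    isClosedMap_iff_kernImage.1 hqclosed (isOpen_iUnion fun l => (hW y l).1)
  have hNc : ⋃ y, kernImage q (⋃ l, W y l) = univ := eq_univ_of_forall fun y =>
    mem_iUnion.2 ⟨y, singleton_subset_iff.1 (subset_kernImage_iff.2 (hfibW y))⟩
  obtain ⟨V, hVo, hVc, hVN, hord⟩ := hY.exists_precise_refinement hNo hNc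
  have hVc' : ⋃ y, q ⁻¹' V y = univ := by rw [← preimage_iUnion, hVc, preimage_univ]
  exact hP.exists_open_cover_of_order_le (fun y => (hVo y).preimage hqcont) hVc'
    (fun p => hord (q p)) hW fun y => subset_kernImage_iff.1 (hVN y)

end Covers

section HomotopyExtension

universe u

variable {Z : Type u} [TopologicalSpace Z] [NormalSpace (I × Z)] {C : Set Z}

theorem exists_homotopy_extending {E : Type*} [AddCommGroup E] [Module ℝ E] [TopologicalSpace E]
    [IsTopologicalAddGroup E] [ContinuousSMul ℝ E] [TietzeExtension.{u} E] (hC : IsClosed C)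
    {a b : C(Z, E)} (H : (a.restrict C).Homotopy (b.restrict C)) :
    ∃ F : a.Homotopy b, ∀ (t : I) (p : C), F (t, p) = H (t, p) := by
  obtain ⟨g, hg⟩ := H.toContinuousMap.exists_extension'
    (IsClosedEmbedding.id.prodMap hC.isClosedEmbedding_subtypeVal)
  have hgH : ∀ (t : I) (p : C), g (t, p) = H (t, p) := fun t p => congr_fun hg (t, p)
  let F : a.Homotopy b :=
    { toFun := fun z =>
        g z + (1 - (z.1 : ℝ)) • (a z.2 - g (0, z.2)) + (z.1 : ℝ) • (b z.2 - g (1, z.2))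
      map_zero_left := fun p => by simp
      map_one_left := fun p => by simp }
  refine ⟨F, fun t p => ?_⟩
  calc F (t, p) = g (t, p) + (1 - (t : ℝ)) • (a p - g (0, p)) + (t : ℝ) • (b p - g (1, p)) := rfl
    _ = H (t, p) := by simp [hgH]

theorem IsENR.exists_neighborhood_retraction {X : Type*} [TopologicalSpace X] (hX : IsENR X) :
    ∃ (N : ℕ) (e : C(X, Fin N → ℝ)) (O : Set (Fin N → ℝ)) (ρ : C(O, X)),
      IsOpen O ∧ ∀ x, ∃ hx : e x ∈ O, ρ ⟨e x, hx⟩ = x := by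
  obtain ⟨N, e, O, r, he, hO, heO, hr, hre⟩ := hX
  choose ρ hρ using hr
  have hρcont : Continuous ρ :=
    he.isInducing.continuous_iff.2 (r.continuous.congr fun z => (hρ z).symm)
  refine ⟨N, ⟨e, he.continuous⟩, O, ⟨ρ, hρcont⟩, hO, fun x => ⟨heO ⟨x, rfl⟩, ?_⟩⟩
  exact he.injective ((hρ _).trans (hre _ ⟨x, rfl⟩))

theorem IsENR.exists_isOpen_homotopic_restrict {X : Type*} [TopologicalSpace X] (hX : IsENR X)
    (hC : IsClosed C) {a b : C(Z, X)} (h : (a.restrict C).Homotopic (b.restrict C)) :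
    ∃ W, IsOpen W ∧ C ⊆ W ∧ (a.restrict W).Homotopic (b.restrict W) := by
  obtain ⟨N, e, O, ρ, hO, hρ⟩ := hX.exists_neighborhood_retraction
  obtain ⟨H⟩ := h
  obtain ⟨F, hF⟩ := exists_homotopy_extending (a := e.comp a) (b := e.comp b) hC
    ((ContinuousMap.Homotopy.refl e).comp H)
  have hWO : ∀ z : I × kernImage Prod.snd (F ⁻¹' O), F (z.1, z.2) ∈ O := fun z => z.2.2 rfl
  have hWopen : IsOpen (kernImage Prod.snd (F ⁻¹' O)) :=
    isClosedMap_iff_kernImage.1 isClosedMap_snd_of_compactSpace (hO.preimage F.continuous)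
  refine ⟨kernImage Prod.snd (F ⁻¹' O), hWopen, ?_, ⟨?_⟩⟩
  · rintro p hp ⟨t, _⟩ rfl
    rw [mem_preimage, hF t ⟨_, hp⟩]
    exact (hρ _).1
  · exact
      { toFun := fun z => ρ ⟨F (z.1, z.2), hWO z⟩
        map_zero_left := fun p => by simpa using (hρ (a p)).2
        map_one_left := fun p => by simpa using (hρ (b p)).2 }

end HomotopyExtension

section PathSections

variable {X : Type*} [TopologicalSpace X]

theorem pathSecOn_iff_homotopic {S : Set (X × X)} :
    PathSecOn X S ↔
      (ContinuousMap.fst.restrict S).Homotopic ((ContinuousMap.snd : C(X × X, X)).restrict S) := by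
  constructor
  · rintro ⟨s, hs⟩
    exact ⟨{ toFun := fun z => s z.2 z.1
             map_zero_left := fun p => (hs p).1
             map_one_left := fun p => (hs p).2 }⟩
  · rintro ⟨H⟩
    exact ⟨(H.toContinuousMap.comp ContinuousMap.prodSwap).curry,
      fun p => ⟨H.apply_zero p, H.apply_one p⟩⟩

theorem PathSecOn.mono {S T : Set (X × X)} (hST : S ⊆ T) (hT : PathSecOn X T) :
    PathSecOn X S := by
  obtain ⟨s, hs⟩ := hT
  exact ⟨s.comp (ContinuousMap.inclusion hST), fun p => hs (inclusion hST p)⟩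

theorem pathSecOn_empty : PathSecOn X ∅ :=
  ⟨⟨isEmptyElim, continuous_of_discreteTopology⟩, isEmptyElim⟩

theorem PathSecOn.sUnion {𝒢 : Set (Set (X × X))} (hG : ∀ G ∈ 𝒢, IsOpen G ∧ PathSecOn X G)
    (hdisj : 𝒢.PairwiseDisjoint id) : PathSecOn X (⋃₀ 𝒢) := by
  choose s hs using fun G : 𝒢 => (hG G G.2).2
  let B : 𝒢 → Set ↥(⋃₀ 𝒢) := fun G => Subtype.val ⁻¹' (G : Set (X × X))
  let φ : ∀ G, C(B G, C(I, X)) := fun G =>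
    (s G).comp ⟨fun p => ⟨p, p.2⟩, by fun_prop⟩
  have hφ : ∀ (G G' : 𝒢) (p) (hp : p ∈ B G) (hp' : p ∈ B G'), φ G ⟨p, hp⟩ = φ G' ⟨p, hp'⟩ := by
    intro G G' p hp hp'
    obtain rfl : G = G' := Subtype.ext (hdisj.elim_set G.2 G'.2 p hp hp')
    rfl
  have hB : ∀ p, ∃ G, B G ∈ 𝓝 p := by
    rintro ⟨p, G, hGmem, hpG⟩
    exact ⟨⟨G, hGmem⟩, ((hG G hGmem).1.preimage continuous_subtype_val).mem_nhds hpG⟩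
  refine ⟨ContinuousMap.liftCover B φ hφ hB, ?_⟩
  rintro ⟨p, G, hGmem, hpG⟩
  have happly := ContinuousMap.liftCover_coe (hφ := hφ) (hS := hB) (i := ⟨G, hGmem⟩)
    ⟨⟨p, G, hGmem, hpG⟩, hpG⟩
  rw [happly]
  exact hs ⟨G, hGmem⟩ ⟨p, hpG⟩

theorem isDisjointUnionStable_pathSecOn : IsDisjointUnionStable (PathSecOn X) where
  mono _ _ := PathSecOn.mono
  sUnion _ := PathSecOn.sUnion

theorem IsENR.metrizableSpace (hX : IsENR X) : TopologicalSpace.MetrizableSpace X := by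
  obtain ⟨N, e, O, r, he, -⟩ := hX
  exact he.metrizableSpace

theorem PathSecOn.exists_isOpen_superset (hX : IsENR X) {A : Set (X × X)} (hA : IsClosed A)
    (h : PathSecOn X A) : ∃ W, (IsOpen W ∧ PathSecOn X W) ∧ A ⊆ W := by
  have := hX.metrizableSpace
  obtain ⟨W, hWo, hAW, hW⟩ :=
    hX.exists_isOpen_homotopic_restrict hA (pathSecOn_iff_homotopic.1 h)
  exact ⟨W, ⟨hWo, pathSecOn_iff_homotopic.2 hW⟩, hAW⟩

theorem subTC_le_card {A : Set (X × X)} {κ : Type*} [Fintype κ] {U : κ → Set (X × X)}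
    (hU : ∀ i, (∃ V, IsOpen V ∧ U i = V ∩ A) ∧ PathSecOn X (U i)) (hA : A ⊆ ⋃ i, U i) :
    subTC X A ≤ Fintype.card κ := by
  let e := (Fintype.equivFin κ).symm
  refine sInf_le ⟨_, rfl, U ∘ e, fun i => (hU (e i)).1, ?_, fun i => (hU (e i)).2⟩
  exact (e.surjective.iUnion_comp U).symm ▸ hA

theorem exists_cover_of_subTC_le {A : Set (X × X)} {n : ℕ} (h : subTC X A ≤ n) :
    ∃ V : Fin n → Set (X × X),
      (∀ i, IsOpen (V i) ∧ PathSecOn X (V i ∩ A)) ∧ A ⊆ ⋃ i, V i := by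
  obtain ⟨_, ⟨m, rfl, U, hUo, hUc, hU⟩, hmn⟩ :=
    sInf_lt_iff.1 (h.trans_lt (Nat.cast_lt.2 n.lt_succ_self))
  replace hmn : m ≤ n := Nat.lt_succ_iff.1 (Nat.cast_lt.1 hmn)
  choose V hVo hUV using hUo
  have hinj : Injective (Fin.castLE hmn) := Fin.castLE_injective hmn
  refine ⟨extend (Fin.castLE hmn) V fun _ => ∅, fun i => ?_, fun p hp => ?_⟩
  · by_cases hi : ∃ j, Fin.castLE hmn j = i
    · obtain ⟨j, rfl⟩ := hi
      rw [hinj.extend_apply, ← hUV]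
      exact ⟨hVo j, hU j⟩
    · rw [extend_apply' _ _ _ hi, empty_inter]
      exact ⟨isOpen_empty, pathSecOn_empty⟩
  · obtain ⟨j, hj⟩ := mem_iUnion.1 (hUc hp)
    refine mem_iUnion.2 ⟨Fin.castLE hmn j, ?_⟩
    rw [hinj.extend_apply]
    exact (hUV j ▸ hj).1

theorem IsENR.exists_open_cover_of_subTC_le (hX : IsENR X) {A : Set (X × X)} (hA : IsClosed A)
    {n : ℕ} (h : subTC X A ≤ n) :
    ∃ W : Fin n → Set (X × X), (∀ i, IsOpen (W i) ∧ PathSecOn X (W i)) ∧ A ⊆ ⋃ i, W i := by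
  have := hX.metrizableSpace
  obtain ⟨V, hV, hAV⟩ := exists_cover_of_subTC_le h
  obtain ⟨D, hAD, hDclosed, hDV⟩ :=
    exists_subset_iUnion_closed_subset hA (fun i => (hV i).1) (fun _ _ => toFinite _) hAV
  have hsec : ∀ i, PathSecOn X (D i ∩ A) := fun i =>
    (hV i).2.mono (inter_subset_inter_left A (hDV i))
  choose W hW hDW using fun i => (hsec i).exists_isOpen_superset hX ((hDclosed i).inter hA)
  refine ⟨W, hW, fun p hp => ?_⟩
  obtain ⟨i, hi⟩ := mem_iUnion.1 (hAD hp)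
  exact mem_iUnion.2 ⟨i, hDW i ⟨hi, hp⟩⟩

end PathSections

theorem isClosed_preimage_singleton_of_isClosedMap {M Y : Type*} [TopologicalSpace M] [T1Space M]
    [TopologicalSpace Y] {q : M → Y} (hqcont : Continuous q) (hqclosed : IsClosedMap q) (y : Y) :
    IsClosed (q ⁻¹' {y}) := by
  obtain hempty | ⟨p, rfl⟩ := (q ⁻¹' {y}).eq_empty_or_nonempty
  · exact hempty ▸ isClosed_empty
  · rw [← image_singleton]
    exact (hqclosed {p} isClosed_singleton).preimage hqcont

theorem topComplexity_le_of_closed_map_general {X Y : Type*} [TopologicalSpace X]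
    [TopologicalSpace Y] (hX : IsENR X) {k : ℕ} (hY : CovDimLE Y k) {q : X × X → Y}
    (hqcont : Continuous q) (hqclosed : IsClosedMap q) {n : ℕ}
    (hfib : ∀ y : Y, subTC X (q ⁻¹' {y}) ≤ (n : ℕ∞)) :
    TopComplexity X ≤ (((k + 1) * n : ℕ) : ℕ∞) := by
  have := hX.metrizableSpace
  let := TopologicalSpace.metrizableSpaceMetric X
  have hfibW : ∀ y, ∃ W : Fin n → Set (X × X),
      (∀ i, IsOpen (W i) ∧ PathSecOn X (W i)) ∧ q ⁻¹' {y} ⊆ ⋃ i, W i := fun y =>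
    hX.exists_open_cover_of_subTC_le
      (isClosed_preimage_singleton_of_isClosedMap hqcont hqclosed y) (hfib y)
  obtain ⟨C, hC, hcov⟩ :=
    isDisjointUnionStable_pathSecOn.exists_open_cover_of_fibers hY hqcont hqclosed hfibW
  have hcard : TopComplexity X ≤ Fintype.card (Fin (k + 1) × Fin n) :=
    subTC_le_card (fun x => ⟨⟨C x, (hC x).1, (inter_univ _).symm⟩, (hC x).2⟩) hcov.ge
  simpa only [Fintype.card_prod, Fintype.card_fin] using hcard

/-- If `X` is a path-connected normal ENR, `Y` is paracompact of covering dimension at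
most `k`, and `q : X × X → Y` is a closed continuous map all of whose fibres satisfy
`TC_X(q⁻¹(y)) ≤ n`, then `TC(X) ≤ (k + 1) · n`. -/
theorem topComplexity_le_of_closed_map {X Y : Type*} [TopologicalSpace X]
    [TopologicalSpace Y] [PathConnectedSpace X] [NormalSpace X] (hX : IsENR X)
    [ParacompactSpace Y] (k : ℕ) (hY : CovDimLE Y k)
    (q : X × X → Y) (hqcont : Continuous q) (hqclosed : IsClosedMap q)
    (n : ℕ) (hfib : ∀ y : Y, subTC X (q ⁻¹' {y}) ≤ (n : ℕ∞)) :
    TopComplexity X ≤ (((k + 1) * n : ℕ) : ℕ∞) :=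
  topComplexity_le_of_closed_map_general hX hY hqcont hqclosed hfib
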